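/- Let k be a field of characteristic 3 and let W = (V₁ ⊗ sp(V₂)) ⊕ V₂ be the space described in the context, with the alternating bilinear form (·|·) and the symmetric bilinear map d : W × W → gl(W) described there. Then W, endowed with the triple product [ABC] := d_{A,B}(C) and the form (·|·), is a symplectic triple system. -/

import Mathlib

open scoped TensorProduct

/-- A symplectic triple system: a finite-dimensional vector space `T` over a field `k`
with a nonzero alternating bilinear form `B` and a trilinear product `tp` satisfying
identities (a)–(d). -/
def IsSympTripleSystem (k T : Type*) [Field k] [AddCommGroup T] [Module k T]
    (tp : T →ₗ[k] T →ₗ[k] T →ₗ[k] T) (B : T →ₗ[k] T →ₗ[k] k) : Prop :=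
  (∀ x : T, B x x = 0) ∧ B ≠ 0 ∧
  (∀ x y z : T, tp x y z = tp y x z) ∧
  (∀ x y z : T, tp x y z - tp x z y = B x z • y - B x y • z + (2 * B y z) • x) ∧
  (∀ x y u v w : T, tp x y (tp u v w) =
      tp (tp x y u) v w + tp u (tp x y v) w + tp u v (tp x y w)) ∧
  (∀ x y u v : T, B (tp x y u) v + B u (tp x y v) = 0)

/-- The symplectic Lie algebra `sp(V)` of a bilinear form, as a submodule of
`End(V) = V →ₗ[k] V`. -/
def spSub (k V : Type*) [Field k] [AddCommGroup V] [Module k V]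
    (Bv : V →ₗ[k] V →ₗ[k] k) : Submodule k (V →ₗ[k] V) where
  carrier := {f | ∀ u w : V, Bv (f u) w + Bv u (f w) = 0}
  add_mem' := by
    intro f g hf hg u w
    simp only [Set.mem_setOf_eq, LinearMap.add_apply, map_add] at *
    linear_combination hf u w + hg u w
  zero_mem' := by
    intro u w
    simp
  smul_mem' := by
    intro c f hf u w
    simp only [Set.mem_setOf_eq, LinearMap.smul_apply, map_smul, smul_eq_mul] at *
    linear_combination c * hf u w

/-- The map `γ_{u,v} = ⟨u|·⟩v + ⟨v|·⟩u`. -/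
def gammaMap (k V : Type*) [Field k] [AddCommGroup V] [Module k V]
    (Bv : V →ₗ[k] V →ₗ[k] k) (u v : V) : V →ₗ[k] V :=
  (Bv u).smulRight v + (Bv v).smulRight u

section Model

variable {k : Type*} [Field k]

/-- The action of `q ∈ sp(V₁) ⊕ sp(V₂) ⊕ (V₁ ⊗ V₂)` on `W`, in coordinates. -/
def opCoord (q : Fin 10 → k) (x : Fin 8 → k) : Fin 8 → k :=
  ![q 0 * x 0 + q 1 * x 3 + q 4 * x 2 - q 5 * x 1 + q 6 * x 7 + q 7 * x 6,
    q 0 * x 1 + q 1 * x 4 + 2 * q 3 * x 1 - 2 * q 4 * x 0 - 2 * q 6 * x 6,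
    q 0 * x 2 + q 1 * x 5 - 2 * q 3 * x 2 + 2 * q 5 * x 0 + 2 * q 7 * x 7,
    -q 0 * x 3 + q 2 * x 0 + q 4 * x 5 - q 5 * x 4 + q 8 * x 7 + q 9 * x 6,
    -q 0 * x 4 + q 2 * x 1 + 2 * q 3 * x 4 - 2 * q 4 * x 3 - 2 * q 8 * x 6,
    -q 0 * x 5 + q 2 * x 2 - 2 * q 3 * x 5 + 2 * q 5 * x 3 + 2 * q 9 * x 7,
    q 3 * x 6 + q 4 * x 7 - q 6 * x 3 - q 7 * x 4 + q 8 * x 0 + q 9 * x 1,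
    -q 3 * x 7 + q 5 * x 6 - q 6 * x 5 + q 7 * x 3 + q 8 * x 2 - q 9 * x 0]

/-- The coordinates of the operator `d x y`. -/
def innerCoord (x y : Fin 8 → k) : Fin 10 → k :=
  ![-2 * x 0 * y 3 - x 1 * y 5 - x 2 * y 4 - 2 * x 3 * y 0 - x 4 * y 2 - x 5 * y 1,
    4 * x 0 * y 0 + 2 * x 1 * y 2 + 2 * x 2 * y 1,
    -4 * x 3 * y 3 - 2 * x 4 * y 5 - 2 * x 5 * y 4,
    -x 1 * y 5 + x 2 * y 4 + x 4 * y 2 - x 5 * y 1 + x 6 * y 7 + x 7 * y 6,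
    -2 * x 0 * y 4 + 2 * x 1 * y 3 + 2 * x 3 * y 1 - 2 * x 4 * y 0 - 2 * x 6 * y 6,
    2 * x 0 * y 5 - 2 * x 2 * y 3 - 2 * x 3 * y 2 + 2 * x 5 * y 0 + 2 * x 7 * y 7,
    x 0 * y 6 + x 1 * y 7 + x 6 * y 0 + x 7 * y 1,
    -x 0 * y 7 + x 2 * y 6 + x 6 * y 2 - x 7 * y 0,
    x 3 * y 6 + x 4 * y 7 + x 6 * y 3 + x 7 * y 4,
    -x 3 * y 7 + x 5 * y 6 + x 6 * y 5 - x 7 * y 3]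

/-- The alternating form of `W`, in coordinates. -/
def formCoord (x y : Fin 8 → k) : k :=
  2 * x 0 * y 3 + x 1 * y 5 + x 2 * y 4 - 2 * x 3 * y 0 - x 4 * y 2 - x 5 * y 1
    + x 6 * y 7 - x 7 * y 6

/-- The Lie bracket of `sp(V₁) ⊕ sp(V₂) ⊕ (V₁ ⊗ V₂)`, in coordinates. -/
def lieCoord (q r : Fin 10 → k) : Fin 10 → k :=
  ![q 1 * r 2 - q 2 * r 1 - q 6 * r 9 + q 7 * r 8 - q 8 * r 7 + q 9 * r 6,
    2 * q 0 * r 1 - 2 * q 1 * r 0 + 2 * q 6 * r 7 - 2 * q 7 * r 6,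
    -2 * q 0 * r 2 + 2 * q 2 * r 0 - 2 * q 8 * r 9 + 2 * q 9 * r 8,
    q 4 * r 5 - q 5 * r 4 + q 6 * r 9 + q 7 * r 8 - q 8 * r 7 - q 9 * r 6,
    2 * q 3 * r 4 - 2 * q 4 * r 3 - 2 * q 6 * r 8 + 2 * q 8 * r 6,
    -2 * q 3 * r 5 + 2 * q 5 * r 3 + 2 * q 7 * r 9 - 2 * q 9 * r 7,
    q 0 * r 6 + q 1 * r 8 + q 3 * r 6 + q 4 * r 7 - q 6 * r 0 - q 6 * r 3 - q 7 * r 4 - q 8 * r 1,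
    q 0 * r 7 + q 1 * r 9 - q 3 * r 7 + q 5 * r 6 - q 6 * r 5 - q 7 * r 0 + q 7 * r 3 - q 9 * r 1,
    -q 0 * r 8 + q 2 * r 6 + q 3 * r 8 + q 4 * r 9 - q 6 * r 2 + q 8 * r 0 - q 8 * r 3 - q 9 * r 4,
    -q 0 * r 9 + q 2 * r 7 - q 3 * r 9 + q 5 * r 8 - q 7 * r 2 - q 8 * r 5 + q 9 * r 0 + q 9 * r 3]

lemma opCoord_add (q r : Fin 10 → k) (x : Fin 8 → k) :
    opCoord (q + r) x = opCoord q x + opCoord r x := by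
  ext i
  fin_cases i <;> simp [opCoord] <;> ring

set_option maxHeartbeats 1000000 in
lemma opCoord_lieCoord [CharP k 3] (q r : Fin 10 → k) (x : Fin 8 → k) :
    opCoord q (opCoord r x) = opCoord (lieCoord q r) x + opCoord r (opCoord q x) := by
  have h3 : (3 : k) = 0 := CharP.ofNat_eq_zero k 3
  ext i
  fin_cases i <;> simp [opCoord, lieCoord]
  · linear_combination (q 6 * r 8 * x 2 + q 7 * r 9 * x 1 - q 8 * r 6 * x 2 - q 9 * r 7 * x 1) * h3
  · linear_combination (-2 * q 6 * r 8 * x 0 - q 6 * r 9 * x 1 - q 7 * r 8 * x 1 + 2 * q 8 * r 6 * x 0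
      + q 8 * r 7 * x 1 + q 9 * r 6 * x 1) * h3
  · linear_combination (q 6 * r 9 * x 2 + q 7 * r 8 * x 2 - 2 * q 7 * r 9 * x 0 - q 8 * r 7 * x 2
      - q 9 * r 6 * x 2 + 2 * q 9 * r 7 * x 0) * h3
  · linear_combination (q 6 * r 8 * x 5 + q 7 * r 9 * x 4 - q 8 * r 6 * x 5 - q 9 * r 7 * x 4) * h3
  · linear_combination (-2 * q 6 * r 8 * x 3 - q 6 * r 9 * x 4 - q 7 * r 8 * x 4 + 2 * q 8 * r 6 * x 3
      + q 8 * r 7 * x 4 + q 9 * r 6 * x 4) * h3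
  · linear_combination (q 6 * r 9 * x 5 + q 7 * r 8 * x 5 - 2 * q 7 * r 9 * x 3 - q 8 * r 7 * x 5
      - q 9 * r 6 * x 5 + 2 * q 9 * r 7 * x 3) * h3
  · ring
  · ring

set_option maxHeartbeats 1000000 in
lemma lieCoord_innerCoord [CharP k 3] (q : Fin 10 → k) (x y : Fin 8 → k) :
    lieCoord q (innerCoord x y) = innerCoord (opCoord q x) y + innerCoord x (opCoord q y) := by
  have h3 : (3 : k) = 0 := CharP.ofNat_eq_zero k 3
  ext i
  fin_cases i <;> simp [opCoord, lieCoord, innerCoord]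
  · linear_combination (q 6 * x 3 * y 7 - q 6 * x 5 * y 6 - q 6 * x 6 * y 5 + q 6 * x 7 * y 3
      + q 7 * x 3 * y 6 + q 7 * x 4 * y 7 + q 7 * x 6 * y 3 + q 7 * x 7 * y 4
      + q 8 * x 0 * y 7 - q 8 * x 2 * y 6 - q 8 * x 6 * y 2 + q 8 * x 7 * y 0
      + q 9 * x 0 * y 6 + q 9 * x 1 * y 7 + q 9 * x 6 * y 0 + q 9 * x 7 * y 1) * h3
  · linear_combination (-2 * q 6 * x 0 * y 7 + 2 * q 6 * x 2 * y 6 + 2 * q 6 * x 6 * y 2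
      - 2 * q 6 * x 7 * y 0 - 2 * q 7 * x 0 * y 6 - 2 * q 7 * x 1 * y 7
      - 2 * q 7 * x 6 * y 0 - 2 * q 7 * x 7 * y 1) * h3
  · linear_combination (2 * q 8 * x 3 * y 7 - 2 * q 8 * x 5 * y 6 - 2 * q 8 * x 6 * y 5
      + 2 * q 8 * x 7 * y 3 + 2 * q 9 * x 3 * y 6 + 2 * q 9 * x 4 * y 7
      + 2 * q 9 * x 6 * y 3 + 2 * q 9 * x 7 * y 4) * h3
  · ring
  · ring
  · ring
  · linear_combination (q 6 * x 0 * y 3 + q 6 * x 1 * y 5 + q 6 * x 3 * y 0 + q 6 * x 5 * y 1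
      + q 7 * x 0 * y 4 - q 7 * x 1 * y 3 - q 7 * x 3 * y 1 + q 7 * x 4 * y 0
      - 2 * q 8 * x 0 * y 0 - q 8 * x 1 * y 2 - q 8 * x 2 * y 1) * h3
  · linear_combination (-q 6 * x 0 * y 5 + q 6 * x 2 * y 3 + q 6 * x 3 * y 2 - q 6 * x 5 * y 0
      + q 7 * x 0 * y 3 + q 7 * x 2 * y 4 + q 7 * x 3 * y 0 + q 7 * x 4 * y 2
      - 2 * q 9 * x 0 * y 0 - q 9 * x 1 * y 2 - q 9 * x 2 * y 1) * h3
  · linear_combination (2 * q 6 * x 3 * y 3 + q 6 * x 4 * y 5 + q 6 * x 5 * y 4 - q 8 * x 0 * y 3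
      - q 8 * x 2 * y 4 - q 8 * x 3 * y 0 - q 8 * x 4 * y 2 + q 9 * x 0 * y 4
      - q 9 * x 1 * y 3 - q 9 * x 3 * y 1 + q 9 * x 4 * y 0) * h3
  · linear_combination (2 * q 7 * x 3 * y 3 + q 7 * x 4 * y 5 + q 7 * x 5 * y 4 - q 8 * x 0 * y 5
      + q 8 * x 2 * y 3 + q 8 * x 3 * y 2 - q 8 * x 5 * y 0 - q 9 * x 0 * y 3
      - q 9 * x 1 * y 5 - q 9 * x 3 * y 0 - q 9 * x 5 * y 1) * h3

lemma opCoord_innerCoord_derivation [CharP k 3] (x y u v w : Fin 8 → k) :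
    opCoord (innerCoord x y) (opCoord (innerCoord u v) w) =
      opCoord (innerCoord (opCoord (innerCoord x y) u) v) w +
        opCoord (innerCoord u (opCoord (innerCoord x y) v)) w +
          opCoord (innerCoord u v) (opCoord (innerCoord x y) w) := by
  rw [opCoord_lieCoord, lieCoord_innerCoord, opCoord_add]

lemma opCoord_innerCoord_sub [CharP k 3] (x y z : Fin 8 → k) :
    opCoord (innerCoord x y) z - opCoord (innerCoord x z) y =
      formCoord x z • y - formCoord x y • z + (2 * formCoord y z) • x := by
  have h3 : (3 : k) = 0 := CharP.ofNat_eq_zero k 3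
  ext i
  fin_cases i <;> simp [opCoord, innerCoord, formCoord]
  · linear_combination (x 6 * y 2 * z 6 - x 6 * y 6 * z 2 + x 7 * y 1 * z 7 - x 7 * y 7 * z 1) * h3
  · linear_combination (-2 * x 6 * y 0 * z 6 - x 6 * y 1 * z 7 + 2 * x 6 * y 6 * z 0 + x 6 * y 7 * z 1
      - x 7 * y 1 * z 6 + x 7 * y 6 * z 1) * h3
  · linear_combination (x 6 * y 2 * z 7 - x 6 * y 7 * z 2 - 2 * x 7 * y 0 * z 7 + x 7 * y 2 * z 6
      - x 7 * y 6 * z 2 + 2 * x 7 * y 7 * z 0) * h3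
  · linear_combination (x 6 * y 5 * z 6 - x 6 * y 6 * z 5 + x 7 * y 4 * z 7 - x 7 * y 7 * z 4) * h3
  · linear_combination (-2 * x 6 * y 3 * z 6 - x 6 * y 4 * z 7 + 2 * x 6 * y 6 * z 3 + x 6 * y 7 * z 4
      - x 7 * y 4 * z 6 + x 7 * y 6 * z 4) * h3
  · linear_combination (x 6 * y 5 * z 7 - x 6 * y 7 * z 5 - 2 * x 7 * y 3 * z 7 + x 7 * y 5 * z 6
      - x 7 * y 6 * z 5 + 2 * x 7 * y 7 * z 3) * h3
  · linear_combination (x 0 * y 3 * z 6 - x 0 * y 4 * z 7 - x 0 * y 6 * z 3 + x 0 * y 7 * z 4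
      + x 1 * y 3 * z 7 - x 1 * y 7 * z 3 + x 2 * y 4 * z 6 - x 2 * y 6 * z 4
      - x 3 * y 0 * z 6 + x 3 * y 1 * z 7 + x 3 * y 6 * z 0 - x 3 * y 7 * z 1
      - x 4 * y 0 * z 7 + x 4 * y 7 * z 0 - x 5 * y 1 * z 6 + x 5 * y 6 * z 1
      - 2 * x 6 * y 0 * z 3 - x 6 * y 1 * z 5 - x 6 * y 2 * z 4 + 2 * x 6 * y 3 * z 0
      + x 6 * y 4 * z 2 + x 6 * y 5 * z 1 - 2 * x 6 * y 6 * z 7 + 2 * x 6 * y 7 * z 6) * h3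
  · linear_combination (x 0 * y 3 * z 7 + x 0 * y 5 * z 6 - x 0 * y 6 * z 5 - x 0 * y 7 * z 3
      + x 1 * y 5 * z 7 - x 1 * y 7 * z 5 - x 2 * y 3 * z 6 + x 2 * y 6 * z 3
      - x 3 * y 0 * z 7 - x 3 * y 2 * z 6 + x 3 * y 6 * z 2 + x 3 * y 7 * z 0
      - x 4 * y 2 * z 7 + x 4 * y 7 * z 2 + x 5 * y 0 * z 6 - x 5 * y 6 * z 0
      - 2 * x 7 * y 0 * z 3 - x 7 * y 1 * z 5 - x 7 * y 2 * z 4 + 2 * x 7 * y 3 * z 0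
      + x 7 * y 4 * z 2 + x 7 * y 5 * z 1 - 2 * x 7 * y 6 * z 7 + 2 * x 7 * y 7 * z 6) * h3

lemma formCoord_opCoord [CharP k 3] (q : Fin 10 → k) (x y : Fin 8 → k) :
    formCoord (opCoord q x) y + formCoord x (opCoord q y) = 0 := by
  have h3 : (3 : k) = 0 := CharP.ofNat_eq_zero k 3
  simp [opCoord, formCoord]
  linear_combination (-q 6 * x 3 * y 7 + q 6 * x 5 * y 6 - q 6 * x 6 * y 5 + q 6 * x 7 * y 3
    - q 7 * x 3 * y 6 - q 7 * x 4 * y 7 + q 7 * x 6 * y 3 + q 7 * x 7 * y 4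
    + q 8 * x 0 * y 7 - q 8 * x 2 * y 6 + q 8 * x 6 * y 2 - q 8 * x 7 * y 0
    + q 9 * x 0 * y 6 + q 9 * x 1 * y 7 - q 9 * x 6 * y 0 - q 9 * x 7 * y 1) * h3

lemma formCoord_self (x : Fin 8 → k) : formCoord x x = 0 := by
  simp only [formCoord]
  ring

end Model

section SymplecticPlane

variable {k V : Type*} [Field k] [AddCommGroup V] [Module k V] {B : V →ₗ[k] V →ₗ[k] k}

lemma exists_basis_of_alternating_ne_zero [FiniteDimensional k V]
    (hV : Module.finrank k V = 2) (halt : ∀ v, B v v = 0) (hne : B ≠ 0) :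
    ∃ b : Module.Basis (Fin 2) k V, B (b 0) (b 1) = 1 := by
  obtain ⟨u, v, huv⟩ : ∃ u v, B u v ≠ 0 := by
    by_contra! h
    exact hne (LinearMap.ext₂ h)
  have hu : u ≠ 0 := by
    rintro rfl
    simp at huv
  have hli : LinearIndependent k ![u, (B u v)⁻¹ • v] := by
    refine (LinearIndependent.pair_iff' hu).2 fun a ha ↦ ?_
    have := congrArg (B u) ha
    simp [halt, huv] at this
  refine ⟨basisOfLinearIndependentOfCardEqFinrank hli (by simp [hV]), ?_⟩
  simp [huv]

lemma alternating_swap (halt : ∀ v, B v v = 0) (u v : V) : B u v = -B v u := by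
  have := halt (u + v)
  simp only [map_add, LinearMap.add_apply, halt] at this
  linear_combination this

variable {b : Module.Basis (Fin 2) k V}

lemma exists_eq_smul_add_smul (b : Module.Basis (Fin 2) k V) (v : V) :
    ∃ x y : k, v = x • b 0 + y • b 1 :=
  ⟨b.repr v 0, b.repr v 1, ((Fin.sum_univ_two _).symm.trans (b.sum_repr v)).symm⟩

/-- The element of `sp(V)` with matrix `!![p, q; r, -p]` in a symplectic basis. -/
noncomputable def spElt (halt : ∀ v, B v v = 0) (hb : B (b 0) (b 1) = 1) (p q r : k) :
    spSub k V B :=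
  ⟨Matrix.toLin b b !![p, q; r, -p], fun u w ↦ by
    have hb' : B (b 1) (b 0) = -1 := by rw [alternating_swap halt, hb]
    obtain ⟨x, y, rfl⟩ := exists_eq_smul_add_smul b u
    obtain ⟨z, t, rfl⟩ := exists_eq_smul_add_smul b w
    simp [Matrix.toLin_self, halt, hb, hb']
    ring⟩

section

variable (halt : ∀ v, B v v = 0) (hb : B (b 0) (b 1) = 1)
include halt hb

lemma basis_one_zero : B (b 1) (b 0) = -1 := by
  rw [alternating_swap halt, hb]

lemma spElt_apply_zero (p q r : k) :
    (spElt halt hb p q r : V →ₗ[k] V) (b 0) = p • b 0 + r • b 1 := by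
  simp [spElt, Matrix.toLin_self]

lemma spElt_apply_one (p q r : k) :
    (spElt halt hb p q r : V →ₗ[k] V) (b 1) = q • b 0 - p • b 1 := by
  simp [spElt, Matrix.toLin_self, sub_eq_add_neg]

lemma spElt_apply (p q r x y : k) :
    (spElt halt hb p q r : V →ₗ[k] V) (x • b 0 + y • b 1) =
      (p * x + q * y) • b 0 + (r * x - p * y) • b 1 := by
  simp only [map_add, map_smul, spElt_apply_zero, spElt_apply_one]
  module

lemma eq_spElt {f : V →ₗ[k] V} {p q r : k} (h0 : f (b 0) = p • b 0 + r • b 1)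
    (h1 : f (b 1) = q • b 0 - p • b 1) : f = spElt halt hb p q r := by
  refine b.ext fun i ↦ ?_
  fin_cases i
  · simpa [spElt_apply_zero] using h0
  · simpa [spElt_apply_one] using h1

lemma exists_eq_spElt (s : spSub k V B) : ∃ p q r : k, s = spElt halt hb p q r := by
  obtain ⟨p, r, h0⟩ := exists_eq_smul_add_smul b (s.1 (b 0))
  obtain ⟨q, t, h1⟩ := exists_eq_smul_add_smul b (s.1 (b 1))
  have hs := s.2 (b 0) (b 1)
  simp only [h0, h1, map_add, map_smul, LinearMap.add_apply, LinearMap.smul_apply, halt, hb,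
    smul_eq_mul] at hs
  obtain rfl : t = -p := by linear_combination hs
  exact ⟨p, q, r, Subtype.ext (eq_spElt halt hb h0 (by rw [h1]; module))⟩

lemma spElt_eq_smul_add (p q r : k) :
    spElt halt hb p q r =
      p • spElt halt hb 1 0 0 + q • spElt halt hb 0 1 0 + r • spElt halt hb 0 0 1 := by
  refine (Subtype.ext (eq_spElt halt hb ?_ ?_)).symm
  · simp [spElt_apply_zero]
  · simp [spElt_apply_one, neg_add_eq_sub]

lemma trace_spElt_comp (p q r p' q' r' : k) :
    LinearMap.trace k V
        ((spElt halt hb p q r : V →ₗ[k] V) ∘ₗ (spElt halt hb p' q' r' : V →ₗ[k] V)) =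
      2 * p * p' + q * r' + r * q' := by
  rw [LinearMap.trace_eq_matrix_trace k b, LinearMap.toMatrix_comp b b b]
  simp [spElt, Matrix.trace_fin_two]
  ring

lemma commutator_spElt (p q r p' q' r' : k) :
    (spElt halt hb p q r : V →ₗ[k] V) ∘ₗ (spElt halt hb p' q' r' : V →ₗ[k] V) -
        (spElt halt hb p' q' r' : V →ₗ[k] V) ∘ₗ (spElt halt hb p q r : V →ₗ[k] V) =
      spElt halt hb (q * r' - r * q') (2 * (p * q' - q * p')) (2 * (r * p' - p * r')) := by
  apply eq_spElt <;>
    simp only [LinearMap.sub_apply, LinearMap.comp_apply, spElt_apply_zero, spElt_apply_one,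
      map_add, map_sub, map_smul] <;>
    module

lemma gammaMap_eq_spElt (x y z w : k) :
    gammaMap k V B (x • b 0 + y • b 1) (z • b 0 + w • b 1) =
      spElt halt hb (-(x * w + y * z)) (2 * x * z) (-2 * y * w) := by
  apply eq_spElt <;>
    simp only [gammaMap, LinearMap.add_apply, LinearMap.smulRight_apply, LinearMap.smul_apply,
      map_add, map_smul, halt, hb, basis_one_zero halt hb, smul_eq_mul] <;>
    module

end

end SymplecticPlane

section Coordinates

variable {k V₁ V₂ : Type*} [Field k] [AddCommGroup V₁] [Module k V₁] [AddCommGroup V₂]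
  [Module k V₂] {B₂ : V₂ →ₗ[k] V₂ →ₗ[k] k}

/-- The parametrization of `W = (V₁ ⊗ sp(V₂)) ⊕ V₂` given by symplectic bases. -/
noncomputable def ofCoord (b₁ : Module.Basis (Fin 2) k V₁) {b₂ : Module.Basis (Fin 2) k V₂}
    (halt : ∀ v, B₂ v v = 0) (hb : B₂ (b₂ 0) (b₂ 1) = 1) :
    (Fin 8 → k) →ₗ[k] (V₁ ⊗[k] spSub k V₂ B₂) × V₂ where
  toFun x := (b₁ 0 ⊗ₜ spElt halt hb (x 0) (x 1) (x 2) + b₁ 1 ⊗ₜ spElt halt hb (x 3) (x 4) (x 5),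
    x 6 • b₂ 0 + x 7 • b₂ 1)
  map_add' x y := by
    ext1
    · simp only [Pi.add_apply, Prod.fst_add, spElt_eq_smul_add halt hb (x _ + _),
        spElt_eq_smul_add halt hb (x _), spElt_eq_smul_add halt hb (y _), TensorProduct.tmul_add,
        TensorProduct.tmul_smul]
      module
    · simp only [Pi.add_apply, Prod.snd_add]
      module
  map_smul' c x := by
    ext1
    · simp only [Pi.smul_apply, Prod.smul_fst, spElt_eq_smul_add halt hb (c * x _),
        spElt_eq_smul_add halt hb (x _), TensorProduct.tmul_add,
        TensorProduct.tmul_smul, smul_eq_mul, RingHom.id_apply]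
      module
    · simp only [Pi.smul_apply, Prod.smul_snd, smul_eq_mul, RingHom.id_apply]
      module

variable (b₁ : Module.Basis (Fin 2) k V₁) {b₂ : Module.Basis (Fin 2) k V₂}
    (halt : ∀ v, B₂ v v = 0) (hb : B₂ (b₂ 0) (b₂ 1) = 1)

lemma ofCoord_apply (x : Fin 8 → k) :
    ofCoord b₁ halt hb x = (b₁ 0 ⊗ₜ spElt halt hb (x 0) (x 1) (x 2), 0) +
      (b₁ 1 ⊗ₜ spElt halt hb (x 3) (x 4) (x 5), 0) + (0, x 6 • b₂ 0 + x 7 • b₂ 1) := by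
  simp [ofCoord]

lemma ofCoord_surjective : Function.Surjective (ofCoord b₁ halt hb) := by
  rw [← LinearMap.range_eq_top, eq_top_iff]
  rintro ⟨t, v⟩ -
  have ht : (t, (0 : V₂)) ∈ LinearMap.range (ofCoord b₁ halt hb) := by
    induction t with
    | zero => exact zero_mem _
    | add s t hs ht => simpa using add_mem hs ht
    | tmul a s =>
      obtain ⟨p, q, r, rfl⟩ := exists_eq_spElt halt hb s
      obtain ⟨x, y, rfl⟩ := exists_eq_smul_add_smul b₁ a
      refine ⟨![x * p, x * q, x * r, y * p, y * q, y * r, 0, 0], ?_⟩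
      ext1
      · simp [ofCoord, spElt_eq_smul_add halt hb (_ * _), spElt_eq_smul_add halt hb p,
          TensorProduct.tmul_add, TensorProduct.add_tmul, TensorProduct.tmul_smul,
          ← TensorProduct.smul_tmul']
        module
      · simp [ofCoord]
  obtain ⟨x, y, rfl⟩ := exists_eq_smul_add_smul b₂ v
  have hv : ((0 : V₁ ⊗[k] spSub k V₂ B₂), x • b₂ 0 + y • b₂ 1) ∈
      LinearMap.range (ofCoord b₁ halt hb) := by
    refine ⟨![0, 0, 0, 0, 0, 0, x, y], ?_⟩
    have h0 : spElt halt hb 0 0 0 = 0 := by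
      rw [spElt_eq_smul_add]
      simp
    simp [ofCoord, h0]
  simpa using add_mem ht hv

end Coordinates

set_option maxHeartbeats 1000000 in
/-- Let `k` be a field of characteristic 3, let `V₁, V₂` be
two-dimensional spaces with nonzero alternating forms `B₁, B₂`, and let
`W = (V₁ ⊗ sp(V₂)) ⊕ V₂`, with the alternating form `Bw` given by
`(a₁⊗s₂ | b₁⊗t₂) = ⟨a₁|b₁⟩₁ tr(s₂t₂)`, `(V₁⊗sp(V₂) | V₂) = 0`, `(a₂|b₂) = ⟨a₂|b₂⟩₂`,
and the symmetric bilinear map `d : W × W → gl(W)` determined on generators as in the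
text. Then `W` with the triple product `[ABC] = d_{A,B}(C)` and the form `Bw` is a
symplectic triple system. -/
theorem STS8_char_three (k V₁ V₂ : Type*) [Field k]
    [AddCommGroup V₁] [Module k V₁] [AddCommGroup V₂] [Module k V₂]
    [FiniteDimensional k V₁] [FiniteDimensional k V₂]
    (hchar : ringChar k = 3)
    (h1 : Module.finrank k V₁ = 2) (h2 : Module.finrank k V₂ = 2)
    (B₁ : V₁ →ₗ[k] V₁ →ₗ[k] k) (h1alt : ∀ v, B₁ v v = 0) (h1ne : B₁ ≠ 0)
    (B₂ : V₂ →ₗ[k] V₂ →ₗ[k] k) (h2alt : ∀ v, B₂ v v = 0) (h2ne : B₂ ≠ 0)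
    (Bw : ((V₁ ⊗[k] ↥(spSub k V₂ B₂)) × V₂) →ₗ[k]
        ((V₁ ⊗[k] ↥(spSub k V₂ B₂)) × V₂) →ₗ[k] k)
    (d : ((V₁ ⊗[k] ↥(spSub k V₂ B₂)) × V₂) →ₗ[k]
        ((V₁ ⊗[k] ↥(spSub k V₂ B₂)) × V₂) →ₗ[k]
        ((V₁ ⊗[k] ↥(spSub k V₂ B₂)) × V₂) →ₗ[k] ((V₁ ⊗[k] ↥(spSub k V₂ B₂)) × V₂))
    -- the values of the alternating form `Bw` on generators:
    (hBw1 : ∀ (a₁ b₁ : V₁) (s₂ t₂ : ↥(spSub k V₂ B₂)),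
      Bw (a₁ ⊗ₜ[k] s₂, 0) (b₁ ⊗ₜ[k] t₂, 0) =
        B₁ a₁ b₁ * LinearMap.trace k V₂ ((s₂ : V₂ →ₗ[k] V₂) ∘ₗ (t₂ : V₂ →ₗ[k] V₂)))
    (hBw2 : ∀ (a₁ : V₁) (s₂ : ↥(spSub k V₂ B₂)) (c₂ : V₂),
      Bw (a₁ ⊗ₜ[k] s₂, 0) (0, c₂) = 0)
    (hBw3 : ∀ (a₁ : V₁) (s₂ : ↥(spSub k V₂ B₂)) (c₂ : V₂),
      Bw (0, c₂) (a₁ ⊗ₜ[k] s₂, 0) = 0)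
    (hBw4 : ∀ a₂ b₂ : V₂, Bw (0, a₂) (0, b₂) = B₂ a₂ b₂)
    -- `d` is symmetric:
    (hdsymm : ∀ A C, d A C = d C A)
    -- the values of `d` on generators:
    (hd1a : ∀ (a₁ b₁ c₁ : V₁) (s₂ t₂ r₂ u : ↥(spSub k V₂ B₂)),
      (u : V₂ →ₗ[k] V₂) =
          ((s₂ : V₂ →ₗ[k] V₂) ∘ₗ (t₂ : V₂ →ₗ[k] V₂) -
            (t₂ : V₂ →ₗ[k] V₂) ∘ₗ (s₂ : V₂ →ₗ[k] V₂)) ∘ₗ (r₂ : V₂ →ₗ[k] V₂) -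
          (r₂ : V₂ →ₗ[k] V₂) ∘ₗ ((s₂ : V₂ →ₗ[k] V₂) ∘ₗ (t₂ : V₂ →ₗ[k] V₂) -
            (t₂ : V₂ →ₗ[k] V₂) ∘ₗ (s₂ : V₂ →ₗ[k] V₂)) →
      d (a₁ ⊗ₜ[k] s₂, 0) (b₁ ⊗ₜ[k] t₂, 0) (c₁ ⊗ₜ[k] r₂, 0) =
        ((LinearMap.trace k V₂ ((s₂ : V₂ →ₗ[k] V₂) ∘ₗ (t₂ : V₂ →ₗ[k] V₂))) •
            (gammaMap k V₁ B₁ a₁ b₁ c₁) ⊗ₜ[k] r₂ - B₁ a₁ b₁ • c₁ ⊗ₜ[k] u, 0))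
    (hd1b : ∀ (a₁ b₁ : V₁) (s₂ t₂ : ↥(spSub k V₂ B₂)) (c₂ : V₂),
      d (a₁ ⊗ₜ[k] s₂, 0) (b₁ ⊗ₜ[k] t₂, 0) (0, c₂) =
        (0, -(B₁ a₁ b₁) • ((s₂ : V₂ →ₗ[k] V₂) ((t₂ : V₂ →ₗ[k] V₂) c₂) -
          (t₂ : V₂ →ₗ[k] V₂) ((s₂ : V₂ →ₗ[k] V₂) c₂))))
    (hd2a : ∀ (a₁ c₁ : V₁) (s₂ r₂ : ↥(spSub k V₂ B₂)) (a₂ : V₂),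
      d (a₁ ⊗ₜ[k] s₂, 0) (0, a₂) (c₁ ⊗ₜ[k] r₂, 0) =
        (0, -(B₁ a₁ c₁) • (r₂ : V₂ →ₗ[k] V₂) ((s₂ : V₂ →ₗ[k] V₂) a₂)))
    (hd2b : ∀ (a₁ : V₁) (s₂ u : ↥(spSub k V₂ B₂)) (a₂ c₂ : V₂),
      (u : V₂ →ₗ[k] V₂) = gammaMap k V₂ B₂ ((s₂ : V₂ →ₗ[k] V₂) a₂) c₂ →
      d (a₁ ⊗ₜ[k] s₂, 0) (0, a₂) (0, c₂) = (-(a₁ ⊗ₜ[k] u), 0))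
    (hd3a : ∀ (c₁ : V₁) (r₂ u : ↥(spSub k V₂ B₂)) (a₂ b₂ : V₂),
      (u : V₂ →ₗ[k] V₂) =
          gammaMap k V₂ B₂ a₂ b₂ ∘ₗ (r₂ : V₂ →ₗ[k] V₂) -
          (r₂ : V₂ →ₗ[k] V₂) ∘ₗ gammaMap k V₂ B₂ a₂ b₂ →
      d (0, a₂) (0, b₂) (c₁ ⊗ₜ[k] r₂, 0) = (-(c₁ ⊗ₜ[k] u), 0))
    (hd3b : ∀ a₂ b₂ c₂ : V₂,
      d (0, a₂) (0, b₂) (0, c₂) = (0, -(gammaMap k V₂ B₂ a₂ b₂ c₂))) :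
    IsSympTripleSystem k ((V₁ ⊗[k] ↥(spSub k V₂ B₂)) × V₂) d Bw := by
  have hk : CharP k 3 := ringChar.of_eq hchar
  obtain ⟨b₁, hb₁⟩ := exists_basis_of_alternating_ne_zero h1 h1alt h1ne
  obtain ⟨b₂, hb₂⟩ := exists_basis_of_alternating_ne_zero h2 h2alt h2ne
  have hb₁' := basis_one_zero h1alt hb₁
  have hb₂' := basis_one_zero h2alt hb₂
  have htensor (p q r p' q' r' p'' q'' r'' : k) (a b c : V₁) := hd1a a b c
    (spElt h2alt hb₂ p q r) (spElt h2alt hb₂ p' q' r') (spElt h2alt hb₂ p'' q'' r'') _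
    (by rw [commutator_spElt, commutator_spElt])
  have hmixed (p q r x y z w : k) (a : V₁) := hd2b a (spElt h2alt hb₂ p q r) _
    (x • b₂ 0 + y • b₂ 1) (z • b₂ 0 + w • b₂ 1) (by rw [spElt_apply, gammaMap_eq_spElt h2alt hb₂])
  have hvector (p q r x y z w : k) (c : V₁) := hd3a c (spElt h2alt hb₂ p q r) _
    (x • b₂ 0 + y • b₂ 1) (z • b₂ 0 + w • b₂ 1) (by rw [gammaMap_eq_spElt h2alt hb₂, commutator_spElt])
  have hform (x y : Fin 8 → k) :
      Bw (ofCoord b₁ h2alt hb₂ x) (ofCoord b₁ h2alt hb₂ y) = formCoord x y := by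
    simp only [ofCoord_apply, map_add, LinearMap.add_apply, hBw1, hBw2, hBw3, hBw4,
      trace_spElt_comp, map_smul, LinearMap.smul_apply, h1alt, h2alt, hb₁, hb₁', hb₂, hb₂',
      smul_eq_mul, formCoord]
    ring
  have hd (x y z : Fin 8 → k) :
      d (ofCoord b₁ h2alt hb₂ x) (ofCoord b₁ h2alt hb₂ y) (ofCoord b₁ h2alt hb₂ z) =
        ofCoord b₁ h2alt hb₂ (opCoord (innerCoord x y) z) := by
    have hswap (v : V₂) (t) : d (0, v) (t, 0) = d (t, 0) (0, v) := hdsymm _ _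
    obtain ⟨H, X, Y, hHXY⟩ : ∃ H X Y, ∀ p q r,
        spElt h2alt hb₂ p q r = p • H + q • X + r • Y :=
      ⟨_, _, _, spElt_eq_smul_add h2alt hb₂⟩
    rw [ofCoord_apply, ofCoord_apply, ofCoord_apply, ofCoord_apply]
    simp only [map_add, LinearMap.add_apply, hswap, htensor, hd1b, hd2a, hmixed,
      hvector, hd3b, trace_spElt_comp, gammaMap_eq_spElt h2alt hb₂, map_smul, spElt_apply_zero,
      spElt_apply_one, map_sub]
    ext1
    · simp only [Prod.fst_add, gammaMap, LinearMap.add_apply, LinearMap.smulRight_apply, h1alt,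
        hb₁, hb₁', hHXY, TensorProduct.tmul_add, TensorProduct.add_tmul, TensorProduct.tmul_smul,
        ← TensorProduct.smul_tmul', opCoord, innerCoord, Matrix.cons_val]
      module
    · simp only [Prod.snd_add, h1alt, hb₁, hb₁', opCoord, innerCoord, Matrix.cons_val]
      module
  refine ⟨fun x ↦ ?_, ?_, fun x y z ↦ by rw [hdsymm], fun x y z ↦ ?_, fun x y u v w ↦ ?_,
    fun x y u v ↦ ?_⟩
  · obtain ⟨x, rfl⟩ := ofCoord_surjective b₁ h2alt hb₂ x
    rw [hform, formCoord_self]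
  · rintro rfl
    have := hBw4 (b₂ 0) (b₂ 1)
    simp [hb₂] at this
  · obtain ⟨x, rfl⟩ := ofCoord_surjective b₁ h2alt hb₂ x
    obtain ⟨y, rfl⟩ := ofCoord_surjective b₁ h2alt hb₂ y
    obtain ⟨z, rfl⟩ := ofCoord_surjective b₁ h2alt hb₂ z
    simp only [hd, hform, ← map_sub, ← map_add, ← map_smul, opCoord_innerCoord_sub]
  · obtain ⟨x, rfl⟩ := ofCoord_surjective b₁ h2alt hb₂ x
    obtain ⟨y, rfl⟩ := ofCoord_surjective b₁ h2alt hb₂ y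
    obtain ⟨u, rfl⟩ := ofCoord_surjective b₁ h2alt hb₂ u
    obtain ⟨v, rfl⟩ := ofCoord_surjective b₁ h2alt hb₂ v
    obtain ⟨w, rfl⟩ := ofCoord_surjective b₁ h2alt hb₂ w
    simp only [hd, ← map_add]
    rw [opCoord_innerCoord_derivation]
  · obtain ⟨x, rfl⟩ := ofCoord_surjective b₁ h2alt hb₂ x
    obtain ⟨y, rfl⟩ := ofCoord_surjective b₁ h2alt hb₂ y
    obtain ⟨u, rfl⟩ := ofCoord_surjective b₁ h2alt hb₂ u
    obtain ⟨v, rfl⟩ := ofCoord_surjective b₁ h2alt hb₂ v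
    simp only [hd, hform, formCoord_opCoord]
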